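/- A two-connected finite simple graph G is cyclically orientable if and only if G is a single edge, or G is a cycle, or G can be written as G' ∪ C where G' is a cyclically orientable graph, C is a cycle, and G' and C meet along exactly one common edge (their intersection consists of one edge and its two endpoints). -/

import Mathlib

/-!
Call two neighbours `a`, `b` of a vertex `u` linked at `u` if some walk joins them that avoids `u`
and all other neighbours of `u`. A shortest such walk closes up through `u` to a chordless cycle, so
a cyclic orientation directs exactly one of the edges `ua`, `ub` away from `u`; hence no three
neighbours of a vertex are pairwise linked.

Suppose that the two ends of an edge never separate the graph, and let `u` have a neighbour `a` and
at least two others. Every neighbour `b ≠ u` of `a` reaches, in `G - u - a`, a first neighbour of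
`u`, its exit, which is unique because two exits and `a` would be pairwise linked at `u`. As not all
exits coincide, two neighbours `b`, `c` of `a` with different exits are linked at `a`; then `b`, `c`
and `u` are pairwise linked at `a`, a contradiction. So all degrees are at most two, and a
two-connected graph of this kind with at least three vertices is a cycle.

In general, take a minimal vertex set `B` that is one side of a decomposition along an edge and is
not the edge alone. An edge separating `G[B]` would cut off a smaller such set, so `G[B]` is a
cycle, and it can be split off.

Conversely, a chordless cycle cannot visit both sides of a decomposition along an edge `xy`, since
`xy` would be a chord. So cyclic orientations of the two sides, one of them reversed if necessary to
agree on `xy`, together form a cyclic orientation.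
-/

open SimpleGraph

variable {V : Type*}

/-- An orientation of a simple graph `G`: a directed relation choosing, for each
edge of `G`, exactly one of its two possible directions. -/
structure SimpleGraph.Orientation (G : SimpleGraph V) : Type _ where
  dir : V → V → Prop
  dir_adj : ∀ u v, dir u v → G.Adj u v
  adj_iff_dir : ∀ u v, G.Adj u v → (dir u v ↔ ¬ dir v u)

/-- A closed walk is a chordless cycle if it is a cycle and the only edges of `G`
between vertices of the cycle are the edges of the cycle itself (i.e. it is an
induced cycle). -/
def SimpleGraph.Walk.IsChordlessCycle {G : SimpleGraph V} {v : V} (c : G.Walk v v) : Prop :=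
  c.IsCycle ∧ ∀ u w : V, u ∈ c.support → w ∈ c.support → G.Adj u w → s(u, w) ∈ c.edges

/-- A cycle (closed walk) is cyclically oriented by an orientation `o` if all of
its darts point the same way around the cycle. -/
def SimpleGraph.Orientation.IsCyclicOn {G : SimpleGraph V} (o : G.Orientation) {v : V}
    (c : G.Walk v v) : Prop :=
  (∀ d ∈ c.darts, o.dir d.toProd.1 d.toProd.2) ∨ (∀ d ∈ c.darts, o.dir d.toProd.2 d.toProd.1)

/-- A graph is cyclically orientable if it admits an orientation in which every
chordless cycle is cyclically oriented. -/
def SimpleGraph.CyclicallyOrientable (G : SimpleGraph V) : Prop :=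
  ∃ o : G.Orientation, ∀ (v : V) (c : G.Walk v v), c.IsChordlessCycle → o.IsCyclicOn c

/-- A subgraph has no cut vertex if it is connected and remains connected after
the deletion of any single one of its vertices. -/
def SimpleGraph.Subgraph.HasNoCutVertex {G : SimpleGraph V} (H : G.Subgraph) : Prop :=
  H.coe.Connected ∧ ∀ v ∈ H.verts, (H.deleteVerts {v}).coe.Connected

/-- A block (two-connected component) of `G`: a maximal subgraph of `G` that has
no cut vertex. -/
def SimpleGraph.Subgraph.IsBlock {G : SimpleGraph V} (H : G.Subgraph) : Prop :=
  H.HasNoCutVertex ∧ ∀ H' : G.Subgraph, H ≤ H' → H'.HasNoCutVertex → H' = H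

/-- A graph is two-connected if it is connected and the removal of any single
vertex leaves it connected (at least two vertices must be removed to
disconnect it). -/
def SimpleGraph.IsTwoConnected (G : SimpleGraph V) : Prop :=
  G.Connected ∧ ∀ v : V, (G.induce {w : V | w ≠ v}).Connected

/-- A graph consists of a single cycle: some cycle passes through all its
vertices and uses all its edges. (A cycle has at least 3 vertices.) -/
def SimpleGraph.IsCycleGraph (G : SimpleGraph V) : Prop :=
  ∃ (v : V) (c : G.Walk v v), c.IsCycle ∧ (∀ w : V, w ∈ c.support) ∧
    ∀ e ∈ G.edgeSet, e ∈ c.edges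

/-- Two subgraphs meet along the single edge `(x, y)`: their intersection
consists exactly of the vertices `x, y` and the edge between them. -/
def SimpleGraph.Subgraph.MeetAlongSingleEdge {G : SimpleGraph V} (G' C : G.Subgraph)
    (x y : V) : Prop :=
  x ≠ y ∧ (G' ⊓ C).verts = {x, y} ∧ (G' ⊓ C).edgeSet = {s(x, y)}

namespace CyclicOrientation

section Reachability

variable {G : SimpleGraph V} {S T : Set V} {a b c : V}

/-- `b` is reachable from `a` by a walk of `G` all of whose vertices, ends included, lie in `S`.
Unlike reachability in `G.induce S`, this keeps the vertices in the ambient type, so that `S` can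
vary. -/
def ReachableIn (G : SimpleGraph V) (S : Set V) (a b : V) : Prop :=
  ∃ w : G.Walk a b, ∀ x ∈ w.support, x ∈ S

lemma ReachableIn.refl (ha : a ∈ S) : ReachableIn G S a a :=
  ⟨.nil, by simpa using ha⟩

lemma ReachableIn.symm (h : ReachableIn G S a b) : ReachableIn G S b a := by
  obtain ⟨w, hw⟩ := h
  exact ⟨w.reverse, by simpa using hw⟩

lemma ReachableIn.trans (hab : ReachableIn G S a b) (hbc : ReachableIn G S b c) :
    ReachableIn G S a c := by
  obtain ⟨w, hw⟩ := hab
  obtain ⟨w', hw'⟩ := hbc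
  exact ⟨w.append w', fun x hx => ((Walk.mem_support_append_iff _ _).1 hx).elim (hw x) (hw' x)⟩

lemma ReachableIn.mono (hST : S ⊆ T) (h : ReachableIn G S a b) : ReachableIn G T a b := by
  obtain ⟨w, hw⟩ := h
  exact ⟨w, fun x hx => hST (hw x hx)⟩

lemma ReachableIn.left_mem (h : ReachableIn G S a b) : a ∈ S := by
  obtain ⟨w, hw⟩ := h
  exact hw a w.start_mem_support

lemma ReachableIn.right_mem (h : ReachableIn G S a b) : b ∈ S :=
  h.symm.left_mem

lemma ReachableIn.cons (hab : G.Adj a b) (ha : a ∈ S) (h : ReachableIn G S b c) :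
    ReachableIn G S a c := by
  obtain ⟨w, hw⟩ := h
  exact ⟨w.cons hab, by simpa [ha] using hw⟩

lemma ReachableIn.concat (h : ReachableIn G S a b) (hbc : G.Adj b c) (hc : c ∈ S) :
    ReachableIn G S a c :=
  (h.symm.cons hbc.symm hc).symm

lemma ReachableIn.exists_first_mem (h : ReachableIn G S a b) (hb : b ∈ T) :
    ∃ t ∈ T, ReachableIn G {x ∈ S | x ∈ T → x = t} a t := by
  obtain ⟨w, hw⟩ := h
  induction w with
  | nil => exact ⟨_, hb, .refl ⟨hw _ (by simp), fun _ => rfl⟩⟩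
  | @cons u v _ huv p ih =>
    have hu : u ∈ S := hw u (by simp)
    by_cases huT : u ∈ T
    · exact ⟨u, huT, .refl ⟨hu, fun _ => rfl⟩⟩
    · obtain ⟨t, ht, hvt⟩ := ih hb fun x hx => hw x (by simp [hx])
      exact ⟨t, ht, hvt.cons huv ⟨hu, fun h => absurd h huT⟩⟩

lemma ReachableIn.exists_consecutive {p : V → Prop} (h : ReachableIn G S b c) (hb : b ∈ T)
    (hc : c ∈ T) (hpb : p b) (hpc : ¬ p c) :
    ∃ b' ∈ T, ∃ c' ∈ T, p b' ∧ ¬ p c' ∧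
      ReachableIn G {x ∈ S | x ∈ T → x = b' ∨ x = c'} b' c' := by
  obtain ⟨w, hw⟩ := h
  have hbS : b ∈ S := hw b w.start_mem_support
  -- Along the walk, `s` is the last vertex of `T` met so far, and it satisfies `p`.
  suffices H : ∀ {a c} (w : G.Walk a c), (∀ x ∈ w.support, x ∈ S) → c ∈ T → ¬ p c →
      ∀ s ∈ T, p s → ReachableIn G {x ∈ S | x ∈ T → x = s} s a →
      ∃ b' ∈ T, ∃ c' ∈ T, p b' ∧ ¬ p c' ∧
        ReachableIn G {x ∈ S | x ∈ T → x = b' ∨ x = c'} b' c' from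
    H w hw hc hpc b hb hpb (.refl ⟨hbS, fun _ => rfl⟩)
  intro a c w hw hc hpc
  induction w with
  | nil => exact fun s _ hps hsc => absurd (hsc.right_mem.2 hc ▸ hps) hpc
  | @cons u v _ huv w ih =>
    intro s hs hps hsu
    have hwS : ∀ x ∈ w.support, x ∈ S := fun x hx => hw x (by simp [hx])
    have hv : v ∈ S := hwS v w.start_mem_support
    by_cases hvT : v ∈ T
    · by_cases hpv : p v
      · exact ih hwS hc hpc v hvT hpv (.refl ⟨hv, fun _ => rfl⟩)
      · have hsu' : ReachableIn G {x ∈ S | x ∈ T → x = s ∨ x = v} s u :=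
          hsu.mono fun x hx => ⟨hx.1, fun hxT => .inl (hx.2 hxT)⟩
        exact ⟨s, hs, v, hvT, hps, hpv, hsu'.concat huv ⟨hv, fun _ => .inr rfl⟩⟩
    · exact ih hwS hc hpc s hs hps (hsu.concat huv ⟨hv, fun h => absurd h hvT⟩)

lemma ReachableIn.exists_adj_ne (h : ReachableIn G S a b) (hab : a ≠ b) :
    ∃ c, G.Adj a c ∧ ReachableIn G {x ∈ S | x ≠ a} c b := by
  classical
  obtain ⟨w, hw⟩ := h
  obtain ⟨p, hp, hpw⟩ : ∃ p : G.Walk a b, p.IsPath ∧ p.support ⊆ w.support :=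
    ⟨w.bypass, w.bypass_isPath, w.support_bypass_subset_support⟩
  cases p with
  | nil => exact absurd rfl hab
  | @cons _ c _ hac q =>
    rw [Walk.cons_isPath_iff] at hp
    exact ⟨c, hac, q, fun x hx => ⟨hw x (hpw (by simp [hx])), fun h => hp.2 (h ▸ hx)⟩⟩

lemma ReachableIn.induce (hTS : T ⊆ S) (h : ReachableIn G T a b) :
    ReachableIn (G.induce S) (Subtype.val ⁻¹' T) ⟨a, hTS h.left_mem⟩ ⟨b, hTS h.right_mem⟩ := by
  obtain ⟨w, hw⟩ := h
  refine ⟨w.induce S fun x hx => hTS (hw x hx), fun x hx => hw x ?_⟩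
  simpa [Walk.support_induce] using hx

lemma mem_of_mem_support_map_induce {a b : S} (w : (G.induce S).Walk a b) {x : V}
    (hx : x ∈ (w.map (Embedding.induce S).toHom).support) : x ∈ S := by
  rw [Walk.support_map, List.mem_map] at hx
  obtain ⟨x, -, rfl⟩ := hx
  exact x.2

lemma preconnected_induce_iff :
    (G.induce S).Preconnected ↔ ∀ a ∈ S, ∀ b ∈ S, ReachableIn G S a b := by
  refine ⟨fun h a ha b hb => ?_, fun h a b => ?_⟩
  · obtain ⟨w⟩ := h ⟨a, ha⟩ ⟨b, hb⟩
    exact ⟨w.map (Embedding.induce S).toHom, fun _ => mem_of_mem_support_map_induce w⟩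
  · obtain ⟨w, -⟩ := (h a a.2 b b.2).induce subset_rfl
    exact ⟨w⟩

lemma isChordless_of_length_eq_dist (p : G.Walk a b) (hp : p.length = G.dist a b) :
    p.IsChordless := by
  classical
  rw [Walk.isChordless_iff_forall_mem_edges]
  induction p with
  | nil => simp
  | @cons u v _ huv p ih =>
    have hpdist : p.length = G.dist v _ :=
      length_eq_dist_of_subwalk hp (p.isSubwalk_cons huv)
    -- An edge from `u` to a later vertex of the geodesic would be a shortcut.
    have hstart : ∀ y ∈ p.support, G.Adj u y → y = v := by
      intro y hy huy
      have hlen := congrArg Walk.length (p.take_spec hy)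
      have hshort := dist_le ((p.dropUntil y hy).cons huy)
      rw [← hp] at hshort
      simp only [Walk.length_cons, Walk.length_append] at hlen hshort
      exact (Walk.eq_of_length_eq_zero (p := p.takeUntil y hy) (by omega)).symm
    have hstart' : ∀ y ∈ p.support, G.Adj u y → s(u, y) ∈ (p.cons huv).edges := by
      intro y hy huy
      simp [hstart y hy huy]
    intro x y hx hy hxy
    rw [Walk.support_cons, List.mem_cons] at hx hy
    obtain rfl | hx := hx <;> obtain rfl | hy := hy
    · exact absurd rfl hxy.ne
    · exact hstart' y hy hxy
    · exact Sym2.eq_swap ▸ hstart' x hx hxy.symm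
    · exact List.mem_cons_of_mem _ (ih hpdist hx hy hxy)

lemma isChordless_map_iff {W : Type*} {H : SimpleGraph W} (f : G ↪g H) {p : G.Walk a b} :
    (p.map f.toHom).IsChordless ↔ p.IsChordless := by
  have hedge : ∀ x y, s(f x, f y) ∈ (p.map f.toHom).edges ↔ s(x, y) ∈ p.edges := fun x y => by
    rw [Walk.edges_map]
    exact List.mem_map_of_injective (Sym2.map.injective f.injective) (a := s(x, y))
  simp only [Walk.isChordless_iff_forall_mem_edges, Walk.support_map, List.mem_map,
    forall_exists_index, and_imp]
  refine ⟨fun h x y hx hy hxy => ?_, fun h _ _ x hx hfx y hy hfy hxy => ?_⟩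
  · exact (hedge x y).1 (h x hx rfl y hy rfl (f.map_adj_iff.2 hxy))
  · subst hfx hfy
    exact (hedge x y).2 (h hx hy (f.map_adj_iff.1 hxy))

lemma ReachableIn.exists_isPath_isChordless (h : ReachableIn G S a b) :
    ∃ p : G.Walk a b, p.IsPath ∧ p.IsChordless ∧ ∀ x ∈ p.support, x ∈ S := by
  obtain ⟨w, -⟩ := h.induce subset_rfl
  obtain ⟨p, hp, hpdist⟩ := w.reachable.exists_path_of_dist
  refine ⟨p.map (Embedding.induce S).toHom, hp.map Subtype.val_injective,
    (isChordless_map_iff _).2 (isChordless_of_length_eq_dist p hpdist),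
    fun _ => mem_of_mem_support_map_induce p⟩

end Reachability

section DegreeBound

variable {G : SimpleGraph V} {u a b c d e : V}

/-- An orientation under which every chordless cycle is cyclically oriented, so that `G` is
cyclically orientable if and only if it has such an orientation. -/
def IsCyclicOrientation (o : G.Orientation) : Prop :=
  ∀ (v : V) (p : G.Walk v v), p.IsChordlessCycle → o.IsCyclicOn p

lemma isChordlessCycle_cons_concat {p : G.Walk a b} (hp : p.IsPath) (hpc : p.IsChordless)
    (hua : G.Adj u a) (hub : G.Adj u b) (hab : a ≠ b) (hu : u ∉ p.support)
    (hends : ∀ x ∈ p.support, G.Adj u x → x = a ∨ x = b) :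
    (Walk.cons hua (p.concat hub.symm)).IsChordlessCycle := by
  have huedge : ∀ x ∈ p.support, G.Adj u x →
      s(u, x) ∈ (Walk.cons hua (p.concat hub.symm)).edges := by
    intro x hx hux
    obtain rfl | rfl := hends x hx hux <;> simp [Walk.edges_concat, Sym2.eq_swap]
  refine ⟨(Walk.cons_isCycle_iff _ _).2 ⟨hp.concat hu _, ?_⟩, fun x y hx hy hxy => ?_⟩
  · have hua_notMem : s(u, a) ∉ p.edges := fun h => hu (p.fst_mem_support_of_mem_edges h)
    simpa [Walk.edges_concat, hua_notMem, hab] using fun h : u = b => absurd h hub.ne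
  · have hx' : x = u ∨ x ∈ p.support := by
      simpa [Walk.support_concat, or_comm, or_assoc] using hx
    have hy' : y = u ∨ y ∈ p.support := by
      simpa [Walk.support_concat, or_comm, or_assoc] using hy
    obtain rfl | hxp := hx' <;> obtain rfl | hyp := hy'
    · exact absurd rfl hxy.ne
    · exact huedge y hyp hxy
    · exact Sym2.eq_swap ▸ huedge x hxp hxy.symm
    · simp [Walk.edges_concat, hpc.mem_edges hxp hyp hxy]

/-- Two neighbours `a` and `b` of `u` are linked at `u` if they are joined by a walk that avoids
`u` and all other neighbours of `u`. For `a ≠ b` this says that a chordless cycle passes through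
`a, u, b`. -/
def Linked (G : SimpleGraph V) (u a b : V) : Prop :=
  ReachableIn G {x | x ≠ u ∧ (G.Adj u x → x = a ∨ x = b)} a b

lemma Linked.dir_iff_not_dir {o : G.Orientation} (ho : IsCyclicOrientation o)
    (h : Linked G u a b) (hua : G.Adj u a) (hub : G.Adj u b) (hab : a ≠ b) :
    o.dir u a ↔ ¬ o.dir u b := by
  obtain ⟨p, hp, hpc, hpS⟩ := ReachableIn.exists_isPath_isChordless h
  have hcycle := isChordlessCycle_cons_concat hp hpc hua hub hab (fun hu => (hpS u hu).1 rfl)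
    fun x hx => (hpS x hx).2
  have hfirst : (⟨(u, a), hua⟩ : G.Dart) ∈ (Walk.cons hua (p.concat hub.symm)).darts := by simp
  have hlast : (⟨(b, u), hub.symm⟩ : G.Dart) ∈ (Walk.cons hua (p.concat hub.symm)).darts := by
    simp [Walk.darts_concat]
  obtain hdir | hdir := ho u _ hcycle
  · exact iff_of_true (hdir _ hfirst) ((o.adj_iff_dir b u hub.symm).1 (hdir _ hlast))
  · exact iff_of_false ((o.adj_iff_dir a u hua.symm).1 (hdir _ hfirst)) (not_not.2 (hdir _ hlast))

lemma not_three_linked (hG : G.CyclicallyOrientable) (hua : G.Adj u a) (hub : G.Adj u b)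
    (huc : G.Adj u c) (hab : a ≠ b) (hac : a ≠ c) (hbc : b ≠ c) (lab : Linked G u a b)
    (lac : Linked G u a c) : ¬ Linked G u b c := by
  intro lbc
  obtain ⟨o, ho⟩ := hG
  have := lab.dir_iff_not_dir ho hua hub hab
  have := lac.dir_iff_not_dir ho hua huc hac
  have := lbc.dir_iff_not_dir ho hub huc hbc
  tauto

/-- `d` is an exit of `b` in `G - u - a` towards the neighbours of `u`: a neighbour of `u` other
than `a` that ends a walk from `b` avoiding `u` and meeting no neighbour of `u` before `d`. -/
structure IsExit (G : SimpleGraph V) (u a b d : V) : Prop where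
  adj : G.Adj u d
  ne : d ≠ a
  reach : ReachableIn G {x | x ≠ u ∧ (G.Adj u x → x = d)} b d

lemma IsExit.linked (hd : IsExit G u a b d) (hua : G.Adj u a) (hab : G.Adj a b) :
    Linked G u a d :=
  ReachableIn.cons hab ⟨hua.ne', fun _ => .inl rfl⟩
    (hd.reach.mono fun _ hx => ⟨hx.1, fun hux => .inr (hx.2 hux)⟩)

lemma IsExit.unique (hG : G.CyclicallyOrientable) (hua : G.Adj u a) (hab : G.Adj a b)
    (hd : IsExit G u a b d) (he : IsExit G u a b e) : d = e := by
  by_contra hde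
  have hlinked : Linked G u d e :=
    ReachableIn.trans (hd.reach.symm.mono fun _ hx => ⟨hx.1, fun hux => .inl (hx.2 hux)⟩)
      (he.reach.mono fun _ hx => ⟨hx.1, fun hux => .inr (hx.2 hux)⟩)
  exact not_three_linked hG hua hd.adj he.adj hd.ne.symm he.ne.symm hde (hd.linked hua hab)
    (he.linked hua hab) hlinked

/-- `G` has no separating edge: deleting the two ends of an edge never disconnects it. -/
def NoSeparatingEdge (G : SimpleGraph V) : Prop :=
  ∀ ⦃u v : V⦄, G.Adj u v → (G.induce {u, v}ᶜ).Preconnected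

lemma NoSeparatingEdge.reachableIn (hs : NoSeparatingEdge G) (hua : G.Adj u a) (hbu : b ≠ u)
    (hba : b ≠ a) (hcu : c ≠ u) (hca : c ≠ a) : ReachableIn G {u, a}ᶜ b c :=
  preconnected_induce_iff.1 (hs hua) b (not_or.2 ⟨hbu, hba⟩) c (not_or.2 ⟨hcu, hca⟩)

lemma NoSeparatingEdge.exists_isExit (hs : NoSeparatingEdge G) (hua : G.Adj u a)
    (hud : G.Adj u d) (hda : d ≠ a) (hbu : b ≠ u) (hba : b ≠ a) : ∃ f, IsExit G u a b f := by
  obtain ⟨f, huf, hbf⟩ :=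
    (hs.reachableIn hua hbu hba hud.ne' hda).exists_first_mem (T := {x | G.Adj u x}) hud
  exact ⟨f, huf, (not_or.1 hbf.right_mem.1).2,
    hbf.mono fun x hx => ⟨(not_or.1 hx.1).1, hx.2⟩⟩

lemma NoSeparatingEdge.exists_isExit_ne (hs : NoSeparatingEdge G) (hua : G.Adj u a)
    (hud : G.Adj u d) (hue : G.Adj u e) (hda : d ≠ a) (hea : e ≠ a) (hed : e ≠ d) :
    ∃ b f, G.Adj a b ∧ b ≠ u ∧ IsExit G u a b f ∧ f ≠ d := by
  obtain ⟨b, hab, hbe⟩ :=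
    (hs.reachableIn hud hua.ne' hda.symm hue.ne' hed).exists_adj_ne hea.symm
  obtain ⟨f, huf, hbf⟩ := hbe.exists_first_mem (T := {x | G.Adj u x}) hue
  have hf := not_or.1 hbf.right_mem.1.1
  refine ⟨b, f, hab, (not_or.1 hbe.left_mem.1).1, ⟨huf, hbf.right_mem.1.2, ?_⟩, hf.2⟩
  exact hbf.mono fun x hx => ⟨(not_or.1 hx.1.1).1, hx.2⟩

lemma linked_of_isExit_ne (hG : G.CyclicallyOrientable) (hua : G.Adj u a) (hab : G.Adj a b)
    (hbd : IsExit G u a b d) (hce : IsExit G u a c e) (hde : d ≠ e)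
    (hbc : ReachableIn G {x ∈ ({u, a}ᶜ : Set V) | G.Adj a x → x = b ∨ x = c} b c) :
    Linked G a b u := by
  obtain ⟨t, ht, hbt⟩ := hbc.exists_first_mem (T := {x | G.Adj u x ∨ x = c}) (.inr rfl)
  by_cases htc : t = c
  · -- Continuing to the exit of `c` would make it an exit of `b` as well.
    subst htc
    have hbt' : ReachableIn G {x | x ≠ u ∧ (G.Adj u x → x = e)} b t := by
      refine hbt.mono fun x hx => ⟨(not_or.1 hx.1.1).1, fun hux => ?_⟩
      obtain rfl := hx.2 (.inl hux)
      exact hce.reach.left_mem.2 hux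
    exact absurd (hbd.unique hG hua hab ⟨hce.adj, hce.ne, hbt'.trans hce.reach⟩) hde
  · have hbt' : ReachableIn G {x | x ≠ a ∧ (G.Adj a x → x = b ∨ x = u)} b t := by
      refine hbt.mono fun x hx => ⟨(not_or.1 hx.1.1).2, fun hax => .inl ?_⟩
      refine (hx.1.2 hax).resolve_right fun hxc => htc ?_
      rw [← hx.2 (.inr hxc), hxc]
    exact hbt'.concat (ht.resolve_right htc).symm ⟨hua.ne, fun _ => .inr rfl⟩

lemma NoSeparatingEdge.exists_linked_isExit_ne (hs : NoSeparatingEdge G)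
    (hG : G.CyclicallyOrientable) (hua : G.Adj u a) (hud : G.Adj u d) (hue : G.Adj u e)
    (hda : d ≠ a) (hea : e ≠ a) (hed : e ≠ d) :
    ∃ b c f g, G.Adj a b ∧ G.Adj a c ∧ IsExit G u a b f ∧ IsExit G u a c g ∧ f ≠ g ∧
      ReachableIn G {x ∈ ({u, a}ᶜ : Set V) | G.Adj a x → x = b ∨ x = c} b c := by
  obtain ⟨b, f, hab, hbu, hbf, hfd⟩ := hs.exists_isExit_ne hua hud hue hda hea hed
  obtain ⟨c, g, hac, hcu, hcg, hgf⟩ := hs.exists_isExit_ne hua hbf.adj hud hbf.ne hda hfd.symm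
  have hcf : ¬ IsExit G u a c f := fun hcf => hgf (hcg.unique hG hua hac hcf)
  obtain ⟨b', hab', c', hac', hb'f, hc'f, hb'c'⟩ :=
    (hs.reachableIn hua hbu hab.ne' hcu hac.ne').exists_consecutive (T := {x | G.Adj a x})
      (p := fun x => IsExit G u a x f) hab hac hbf hcf
  have hc' := not_or.1 hb'c'.right_mem.1
  obtain ⟨g', hc'g'⟩ := hs.exists_isExit hua hud hda hc'.1 hc'.2
  exact ⟨b', c', f, g', hab', hac', hb'f, hc'g', fun h => hc'f (h ▸ hc'g'), hb'c'⟩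

lemma NoSeparatingEdge.encard_neighborSet_le_two (hs : NoSeparatingEdge G)
    (hG : G.CyclicallyOrientable) (u : V) : (G.neighborSet u).encard ≤ 2 := by
  by_contra! h
  obtain ⟨t, htu, ht⟩ := Set.exists_subset_encard_eq (Order.add_one_le_of_lt h)
  obtain ⟨a, d, e, had, hae, hde, rfl⟩ := Set.encard_eq_three.1 ht
  have hua : G.Adj u a := htu (by simp)
  obtain ⟨b, c, f, g, hab, hac, hbf, hcg, hfg, hbc⟩ := hs.exists_linked_isExit_ne hG hua
    (htu (by simp)) (htu (by simp)) had.symm hae.symm hde.symm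
  have hbc_ne : b ≠ c := by
    rintro rfl
    exact hfg (hbf.unique hG hua hab hcg)
  have hb := linked_of_isExit_ne hG hua hab hbf hcg hfg hbc
  have hc := linked_of_isExit_ne hG hua hac hcg hbf hfg.symm
    (hbc.symm.mono fun _ hx => ⟨hx.1, fun hax => (hx.2 hax).symm⟩)
  refine not_three_linked hG hab hac hua.symm hbc_ne hbf.reach.left_mem.1 hcg.reach.left_mem.1
    ?_ hb hc
  exact hbc.mono fun _ hx => ⟨(not_or.1 hx.1).2, hx.2⟩

end DegreeBound

section CycleCriterion

variable {G : SimpleGraph V}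

lemma isCycleGraph_of_ncard_neighborSet_eq_two [Finite V] (hG : G.Connected)
    (htwo : ∀ u, (G.neighborSet u).ncard = 2) : G.IsCycleGraph := by
  obtain ⟨v⟩ := hG.nonempty
  have hcycles : G.IsCycles := fun u _ => htwo u
  have hv : (G.neighborSet v).Nonempty := Set.nonempty_of_ncard_ne_zero (by simp [htwo v])
  obtain ⟨c, hc, hverts⟩ := hcycles.exists_cycle_toSubgraph_verts_eq_connectedComponentSupp
    (v := v) (c := G.connectedComponentMk v) rfl hv
  have hsupp : ∀ w, w ∈ c.support := fun w => by
    rw [← Walk.mem_verts_toSubgraph, hverts]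
    exact ConnectedComponent.sound (hG.preconnected w v)
  refine ⟨v, c, hc, hsupp, Sym2.ind fun x y hxy => ?_⟩
  have hnbr : c.toSubgraph.neighborSet x = G.neighborSet x :=
    Set.eq_of_subset_of_ncard_le (Subgraph.neighborSet_subset _ _)
      (by rw [hc.ncard_neighborSet_toSubgraph_eq_two (hsupp x), htwo x]) (Set.toFinite _)
  rw [← Walk.adj_toSubgraph_iff_mem_edges]
  exact hnbr.ge hxy

lemma reachableIn_of_isTwoConnected (hG : G.IsTwoConnected) {v a b : V} (ha : a ≠ v)
    (hb : b ≠ v) : ReachableIn G {w | w ≠ v} a b :=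
  preconnected_induce_iff.1 (hG.2 v).preconnected a ha b hb

lemma exists_adj_of_isTwoConnected (hG : G.IsTwoConnected) (u : V) : ∃ a, G.Adj u a := by
  obtain ⟨v, hvu⟩ := (hG.2 u).nonempty
  obtain ⟨w⟩ := hG.1.preconnected u v
  exact ⟨w.snd, w.adj_snd (Walk.not_nil_of_ne hvu.symm)⟩

lemma exists_adj_ne_of_isTwoConnected (hG : G.IsTwoConnected) {u v w : V} (huv : u ≠ v)
    (hwu : w ≠ u) (hwv : w ≠ v) : ∃ a, G.Adj u a ∧ a ≠ v := by
  obtain ⟨a, hua, haw⟩ := (reachableIn_of_isTwoConnected hG huv hwv).exists_adj_ne hwu.symm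
  exact ⟨a, hua, haw.left_mem.1⟩

lemma two_le_encard_neighborSet (hG : G.IsTwoConnected) (hV : ∀ x y : V, ∃ z, z ≠ x ∧ z ≠ y)
    (u : V) : 2 ≤ (G.neighborSet u).encard := by
  obtain ⟨a, hua⟩ := exists_adj_of_isTwoConnected hG u
  obtain ⟨z, hzu, hza⟩ := hV u a
  obtain ⟨b, hub, hba⟩ := exists_adj_ne_of_isTwoConnected hG hua.ne hzu hza
  rw [← one_add_one_eq_two]
  exact Order.add_one_le_of_lt (Set.one_lt_encard_iff.2 ⟨a, b, hua, hub, hba.symm⟩)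

lemma isCycleGraph_of_noSeparatingEdge [Finite V] (h2 : G.IsTwoConnected)
    (hV : ∀ x y : V, ∃ z, z ≠ x ∧ z ≠ y) (hG : G.CyclicallyOrientable)
    (hs : NoSeparatingEdge G) : G.IsCycleGraph := by
  refine isCycleGraph_of_ncard_neighborSet_eq_two h2.1 fun u => ?_
  have htwo : (G.neighborSet u).encard = 2 :=
    (hs.encard_neighborSet_le_two hG u).antisymm (two_le_encard_neighborSet h2 hV u)
  simp [Set.ncard_def, htwo]

end CycleCriterion

section Embedding

variable {G : SimpleGraph V} {W : Type*} {H : SimpleGraph W}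

lemma isChordlessCycle_iff {v : V} {c : G.Walk v v} :
    c.IsChordlessCycle ↔ c.IsCycle ∧ c.IsChordless := by
  rw [Walk.isChordless_iff_forall_mem_edges]
  rfl

lemma isChordlessCycle_map_iff (f : G ↪g H) {v : V} {c : G.Walk v v} :
    (c.map f.toHom).IsChordlessCycle ↔ c.IsChordlessCycle := by
  rw [isChordlessCycle_iff, isChordlessCycle_iff, isChordless_map_iff,
    Walk.isCycle_map_iff_of_injective f.injective]

lemma isCyclicOn_map_iff (f : G ↪g H) {o : G.Orientation} {o' : H.Orientation}
    (hdir : ∀ a b, o'.dir (f a) (f b) ↔ o.dir a b) {v : V} {c : G.Walk v v} :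
    o'.IsCyclicOn (c.map f.toHom) ↔ o.IsCyclicOn c := by
  simp [Orientation.IsCyclicOn, Walk.darts_map, hdir]

lemma cyclicallyOrientable_of_embedding (f : G ↪g H) (hH : H.CyclicallyOrientable) :
    G.CyclicallyOrientable := by
  obtain ⟨o, ho⟩ := hH
  refine ⟨⟨fun a b => o.dir (f a) (f b), fun a b h => f.map_adj_iff.1 (o.dir_adj _ _ h),
    fun a b h => o.adj_iff_dir _ _ (f.map_adj_iff.2 h)⟩, fun v c hc => ?_⟩
  exact (isCyclicOn_map_iff f fun _ _ => Iff.rfl).1 (ho _ _ ((isChordlessCycle_map_iff f).2 hc))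

end Embedding

section EdgeSum

variable {G : SimpleGraph V} {A B S : Set V} {x y a b s t : V}

/-- `G` is the edge sum of its subgraphs induced on `A` and `B` along the edge `xy`: these two
subgraphs cover `G` and have exactly the edge `xy` and its ends in common. -/
structure IsEdgeSum (G : SimpleGraph V) (A B : Set V) (x y : V) : Prop where
  adj : G.Adj x y
  union_eq : A ∪ B = Set.univ
  inter_eq : A ∩ B = {x, y}
  mem_of_adj : ∀ ⦃a b⦄, G.Adj a b → a ∈ A ∧ b ∈ A ∨ a ∈ B ∧ b ∈ B

namespace IsEdgeSum

lemma symm (h : IsEdgeSum G A B x y) : IsEdgeSum G B A x y where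
  adj := h.adj
  union_eq := Set.union_comm A B ▸ h.union_eq
  inter_eq := Set.inter_comm A B ▸ h.inter_eq
  mem_of_adj _ _ hab := (h.mem_of_adj hab).symm

lemma left_mem (h : IsEdgeSum G A B x y) : x ∈ A ∩ B :=
  h.inter_eq ▸ .inl rfl

lemma right_mem (h : IsEdgeSum G A B x y) : y ∈ A ∩ B :=
  h.inter_eq ▸ .inr rfl

lemma mem_right_of_notMem_left (h : IsEdgeSum G A B x y) (ha : a ∉ A) : a ∈ B :=
  (h.union_eq ▸ Set.mem_univ a : a ∈ A ∪ B).resolve_left ha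

lemma mem_right_of_adj (h : IsEdgeSum G A B x y) (hab : G.Adj a b) (ha : a ∉ A) : b ∈ B :=
  ((h.mem_of_adj hab).resolve_left fun h => ha h.1).2

lemma eq_or_adj (h : IsEdgeSum G A B x y) (hs : s ∈ A ∩ B) (ht : t ∈ A ∩ B) :
    s = t ∨ G.Adj s t := by
  rw [h.inter_eq] at hs ht
  obtain rfl | rfl := hs <;> obtain rfl | rfl := ht
  exacts [.inl rfl, .inr h.adj, .inr h.adj.symm, .inl rfl]

lemma mk_eq_of_adj (h : IsEdgeSum G A B x y) (hab : G.Adj a b) (ha : a ∈ A ∩ B)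
    (hb : b ∈ A ∩ B) : s(a, b) = s(x, y) := by
  rw [h.inter_eq] at ha hb
  obtain rfl | rfl := ha <;> obtain rfl | rfl := hb
  exacts [absurd rfl hab.ne, rfl, Sym2.eq_swap, absurd rfl hab.ne]

lemma exists_reachableIn_inter (h : IsEdgeSum G A B x y) (hab : ReachableIn G S a b)
    (ha : a ∈ B) (hb : b ∈ A) : ∃ t ∈ A ∩ B, ReachableIn G (S ∩ B) a t := by
  obtain ⟨w, hw⟩ := hab
  induction w with
  | nil => exact ⟨_, ⟨hb, ha⟩, .refl ⟨hw _ (by simp), ha⟩⟩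
  | @cons u v _ huv w ih =>
    have hu : u ∈ S := hw u (by simp)
    by_cases huA : u ∈ A
    · exact ⟨u, ⟨huA, ha⟩, .refl ⟨hu, ha⟩⟩
    · obtain ⟨t, ht, hvt⟩ :=
        ih (h.mem_right_of_adj huv huA) hb fun x hx => hw x (by simp [hx])
      exact ⟨t, ht, hvt.cons huv ⟨hu, ha⟩⟩

lemma reachableIn_inter (h : IsEdgeSum G A B x y) (hS : ∀ a ∈ S, ∀ b ∈ S, ReachableIn G S a b)
    (hxy : x ∈ S ∨ y ∈ S) (ha : a ∈ S ∩ B) (hb : b ∈ S ∩ B) : ReachableIn G (S ∩ B) a b := by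
  obtain ⟨r, hrS, hrA⟩ : ∃ r ∈ S, r ∈ A :=
    hxy.elim (fun hx => ⟨x, hx, h.left_mem.1⟩) fun hy => ⟨y, hy, h.right_mem.1⟩
  obtain ⟨s, hs, has⟩ := h.exists_reachableIn_inter (hS a ha.1 r hrS) ha.2 hrA
  obtain ⟨t, ht, hbt⟩ := h.exists_reachableIn_inter (hS b hb.1 r hrS) hb.2 hrA
  obtain rfl | hst := h.eq_or_adj hs ht
  · exact has.trans hbt.symm
  · exact (has.concat hst hbt.right_mem).trans hbt.symm

lemma isTwoConnected_induce (h : IsEdgeSum G A B x y) (h2 : G.IsTwoConnected) :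
    (G.induce B).IsTwoConnected := by
  have hG : ∀ a ∈ Set.univ, ∀ b ∈ Set.univ, ReachableIn G Set.univ a b := fun a _ b _ =>
    (h2.1.preconnected a b).elim fun w => ⟨w, fun _ _ => trivial⟩
  refine ⟨(connected_iff _).2 ⟨preconnected_induce_iff.2 fun a ha b hb => ?_, ?_⟩,
    fun v => (connected_iff _).2 ⟨preconnected_induce_iff.2 fun a ha b hb => ?_, ?_⟩⟩
  · exact (h.reachableIn_inter hG (.inl trivial) ⟨trivial, ha⟩ ⟨trivial, hb⟩).mono
      Set.inter_subset_right
  · exact ⟨x, h.left_mem.2⟩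
  · have hxy : x ≠ v ∨ y ≠ v := not_and_or.1 fun hv => h.adj.ne (hv.1.trans hv.2.symm)
    have hab := h.reachableIn_inter (fun _ ha _ hb => reachableIn_of_isTwoConnected h2 ha hb) hxy
      ⟨Subtype.coe_ne_coe.2 ha, a.2⟩ ⟨Subtype.coe_ne_coe.2 hb, b.2⟩
    exact (hab.induce Set.inter_subset_right).mono fun c hc => Subtype.coe_ne_coe.1 hc.1
  · obtain hx | hy : x ≠ v ∨ y ≠ v := not_and_or.1 fun hv => h.adj.ne (hv.1.trans hv.2.symm)
    · exact ⟨⟨x, h.left_mem.2⟩, fun he => hx (congrArg Subtype.val he)⟩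
    · exact ⟨⟨y, h.right_mem.2⟩, fun he => hy (congrArg Subtype.val he)⟩

end IsEdgeSum

/-- `B` is a lobe of `G` if it is one side of a decomposition of `G` as an edge sum and contains
a vertex besides the ends of the edge. -/
def IsLobe (G : SimpleGraph V) (B : Set V) : Prop :=
  ∃ A x y, IsEdgeSum G A B x y ∧ (B \ A).Nonempty

lemma isEdgeSum_compl_union {Q : Set V} (hxy : G.Adj x y) (hQ : Disjoint Q {x, y})
    (hclosed : ∀ ⦃p q⦄, p ∈ Q → G.Adj p q → q ∈ Q ∪ {x, y}) :
    IsEdgeSum G Qᶜ (Q ∪ {x, y}) x y where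
  adj := hxy
  union_eq := by rw [← Set.union_assoc, Set.compl_union_self, Set.univ_union]
  inter_eq := by
    rw [Set.inter_union_distrib_left, Set.compl_inter_self, Set.empty_union,
      Set.inter_eq_right.2 hQ.subset_compl_left]
  mem_of_adj a b hab := by
    by_cases ha : a ∈ Q
    · exact .inr ⟨.inl ha, hclosed ha hab⟩
    by_cases hb : b ∈ Q
    · exact .inr ⟨hclosed hb hab.symm, .inl hb⟩
    · exact .inl ⟨ha, hb⟩

lemma isLobe_union {Q : Set V} (hxy : G.Adj x y) (hQ : Disjoint Q {x, y}) (hne : Q.Nonempty)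
    (hclosed : ∀ ⦃p q⦄, p ∈ Q → G.Adj p q → q ∈ Q ∪ {x, y}) : IsLobe G (Q ∪ {x, y}) :=
  ⟨Qᶜ, x, y, isEdgeSum_compl_union hxy hQ hclosed,
    hne.mono fun _ hq => ⟨.inl hq, not_not.2 hq⟩⟩

lemma exists_reachableIn_of_minimal_isLobe (hB : Minimal (IsLobe G) B)
    (h : IsEdgeSum G A B x y) {u v z w : V} (huv : G.Adj u v) (huvB : {u, v} ⊆ B)
    (hz : z ∈ B \ {u, v}) (hw : w ∈ B \ {u, v}) (hzw : ¬ ReachableIn G (B \ {u, v}) z w) :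
    ∃ t ∈ A ∩ B, ReachableIn G (B \ {u, v}) z t := by
  by_contra! hmiss
  -- Otherwise the part of `z` together with `u` and `v` is a smaller lobe.
  let Q : Set V := {q | ReachableIn G (B \ {u, v}) z q}
  have hQ : Disjoint Q {u, v} := Set.disjoint_left.2 fun q hq => hq.right_mem.2
  have hclosed : ∀ ⦃p q⦄, p ∈ Q → G.Adj p q → q ∈ Q ∪ {u, v} := by
    intro p q hp hpq
    have hpA : p ∉ A := fun hpA => hmiss p ⟨hpA, hp.right_mem.1⟩ hp
    refine or_iff_not_imp_right.2 fun hq => ?_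
    exact ReachableIn.concat hp hpq ⟨h.mem_right_of_adj hpq hpA, hq⟩
  have hQB : Q ∪ {u, v} ⊆ B := Set.union_subset (fun q hq => hq.right_mem.1) huvB
  have hBQ := hB.le_of_le (isLobe_union huv hQ ⟨z, .refl hz⟩ hclosed) hQB
  exact hzw ((hBQ hw.1).resolve_right hw.2)

lemma reachableIn_diff_of_minimal_isLobe (hB : Minimal (IsLobe G) B) {u v z w : V}
    (huv : G.Adj u v) (huvB : {u, v} ⊆ B) (hz : z ∈ B \ {u, v}) (hw : w ∈ B \ {u, v}) :
    ReachableIn G (B \ {u, v}) z w := by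
  obtain ⟨A, x, y, h, -⟩ := hB.prop
  by_contra hzw
  obtain ⟨s, hs, hzs⟩ := exists_reachableIn_of_minimal_isLobe hB h huv huvB hz hw hzw
  obtain ⟨t, ht, hwt⟩ :=
    exists_reachableIn_of_minimal_isLobe hB h huv huvB hw hz fun hwz => hzw hwz.symm
  obtain rfl | hst := h.eq_or_adj hs ht
  · exact hzw (hzs.trans hwt.symm)
  · exact hzw ((hzs.concat hst hwt.right_mem).trans hwt.symm)

lemma noSeparatingEdge_induce_of_minimal_isLobe (hB : Minimal (IsLobe G) B) :
    NoSeparatingEdge (G.induce B) := by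
  intro u v huv
  have hmem : ∀ {z : B}, z ∈ ({u, v}ᶜ : Set B) ↔ z.1 ∈ B \ {u.1, v.1} := fun {z} => by
    simp [Subtype.ext_iff]
  refine preconnected_induce_iff.2 fun z hz w hw => ?_
  have hzw := reachableIn_diff_of_minimal_isLobe hB huv
    (Set.insert_subset u.2 (Set.singleton_subset_iff.2 v.2)) (hmem.1 hz) (hmem.1 hw)
  exact (hzw.induce Set.sdiff_subset).mono fun c hc => hmem.2 hc

lemma exists_ne_ne_of_three {W : Type*} {p q r : W} (hpq : p ≠ q) (hpr : p ≠ r) (hqr : q ≠ r)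
    (u v : W) : ∃ z, z ≠ u ∧ z ≠ v := by
  by_contra! hall
  have hall' : ∀ z, z = u ∨ z = v := fun z => or_iff_not_imp_left.2 (hall z)
  grind [hall' p, hall' q, hall' r]

lemma IsEdgeSum.exists_ne_ne (h : IsEdgeSum G A B x y) (hBA : (B \ A).Nonempty) (u v : B) :
    ∃ z : B, z ≠ u ∧ z ≠ v := by
  obtain ⟨p, hpB, hpA⟩ := hBA
  have hxp : x ≠ p := ne_of_mem_of_not_mem h.left_mem.1 hpA
  have hyp : y ≠ p := ne_of_mem_of_not_mem h.right_mem.1 hpA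
  exact exists_ne_ne_of_three (p := (⟨x, h.left_mem.2⟩ : B)) (q := ⟨y, h.right_mem.2⟩)
    (r := ⟨p, hpB⟩) (Subtype.coe_ne_coe.1 h.adj.ne) (Subtype.coe_ne_coe.1 hxp)
    (Subtype.coe_ne_coe.1 hyp) u v

theorem exists_isEdgeSum_isCycleGraph [Finite V] (h2 : G.IsTwoConnected)
    (hG : G.CyclicallyOrientable) (hV : ∀ x y : V, ∃ z, z ≠ x ∧ z ≠ y) :
    ∃ A B x y, IsEdgeSum G A B x y ∧ (G.induce B).IsCycleGraph := by
  obtain ⟨u⟩ := h2.1.nonempty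
  obtain ⟨v, huv⟩ := exists_adj_of_isTwoConnected h2 u
  obtain ⟨p, hpu, hpv⟩ := hV u v
  have hlobe : ∃ B, IsLobe G B := ⟨_, isLobe_union huv disjoint_compl_left
    ⟨p, not_or.2 ⟨hpu, hpv⟩⟩ fun _ q _ _ => (em (q ∈ ({u, v} : Set V))).symm⟩
  obtain ⟨B, hB⟩ := exists_minimal_of_wellFoundedLT _ hlobe
  obtain ⟨A, x, y, h, hBA⟩ := hB.prop
  exact ⟨A, B, x, y, h, isCycleGraph_of_noSeparatingEdge (h.isTwoConnected_induce h2)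
    (h.exists_ne_ne hBA) (cyclicallyOrientable_of_embedding (Embedding.induce B) hG)
    (noSeparatingEdge_induce_of_minimal_isLobe hB)⟩

end EdgeSum

section Gluing

variable {G : SimpleGraph V} {A B S : Set V} {x y : V}

/-- The orientation obtained by reversing every edge. -/
def reverseOrientation (o : G.Orientation) : G.Orientation where
  dir a b := o.dir b a
  dir_adj _ _ h := (o.dir_adj _ _ h).symm
  adj_iff_dir _ _ h := o.adj_iff_dir _ _ h.symm

lemma isCyclicOn_reverseOrientation_iff {o : G.Orientation} {v : V} {c : G.Walk v v} :
    (reverseOrientation o).IsCyclicOn c ↔ o.IsCyclicOn c :=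
  or_comm

lemma exists_isCyclicOrientation_dir (hG : G.CyclicallyOrientable) (hxy : G.Adj x y) :
    ∃ o : G.Orientation, IsCyclicOrientation o ∧ o.dir x y := by
  obtain ⟨o, ho⟩ := hG
  by_cases hdir : o.dir x y
  · exact ⟨o, ho, hdir⟩
  · exact ⟨reverseOrientation o, fun v c hc => isCyclicOn_reverseOrientation_iff.2 (ho v c hc),
      (o.adj_iff_dir y x hxy.symm).2 hdir⟩

lemma isCyclicOn_of_support_subset {o : G.Orientation} {o' : (G.induce S).Orientation}
    (ho' : IsCyclicOrientation o') (hdir : ∀ a b : S, o.dir a b ↔ o'.dir a b) {v : V}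
    {c : G.Walk v v} (hc : c.IsChordlessCycle) (hcS : ∀ z ∈ c.support, z ∈ S) :
    o.IsCyclicOn c := by
  have hmap : (c.induce S hcS).map (Embedding.induce S).toHom = c := Walk.map_induce c hcS
  rw [← hmap] at hc ⊢
  exact (isCyclicOn_map_iff _ hdir).2 (ho' _ _ ((isChordlessCycle_map_iff _).1 hc))

lemma exists_arcs_of_isCycle {v p q : V} {c : G.Walk v v} (hc : c.IsCycle) (hp : p ∈ c.support)
    (hq : q ∈ c.support) :
    ∃ (w₁ : G.Walk p q) (w₂ : G.Walk q p), w₁.support ⊆ c.support ∧ w₂.support ⊆ c.support ∧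
      (∀ r ∈ w₁.support, r ∈ w₂.support → r = p ∨ r = q) ∧
      ∀ e ∈ c.edges, e ∈ w₁.edges ∨ e ∈ w₂.edges := by
  classical
  have hsupp : ∀ {r}, r ∈ (c.rotate p hp).support ↔ r ∈ c.support :=
    fun {_} => Walk.mem_support_rotate_iff ..
  have hq' : q ∈ (c.rotate p hp).support := hsupp.2 hq
  refine ⟨(c.rotate p hp).takeUntil q hq', (c.rotate p hp).dropUntil q hq',
    fun r hr => hsupp.1 (Walk.support_takeUntil_subset_support _ hq' hr),
    fun r hr => hsupp.1 (Walk.support_dropUntil_subset_support _ hq' hr), fun r h₁ h₂ => ?_,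
    fun e he => ?_⟩
  · have hnodup := (hc.rotate hp).support_nodup
    rw [← (c.rotate p hp).take_spec hq', Walk.tail_support_append, List.nodup_append'] at hnodup
    rw [Walk.mem_support_iff] at h₁ h₂
    by_contra! h
    exact hnodup.2.2 (h₁.resolve_left h.1) (h₂.resolve_left h.2)
  · have he' := (c.rotate_edges p hp).mem_iff.2 he
    rwa [← (c.rotate p hp).take_spec hq', Walk.edges_append, List.mem_append] at he'

namespace IsEdgeSum

lemma exists_mem_support (h : IsEdgeSum G A B x y) {p q : V} (w : G.Walk p q) (hp : p ∈ B)
    (hq : q ∈ A) : ∃ t ∈ A ∩ B, t ∈ w.support := by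
  obtain ⟨t, ht, hpt⟩ := h.exists_reachableIn_inter (S := {z | z ∈ w.support}) ⟨w, fun _ hz => hz⟩
    hp hq
  exact ⟨t, ht, hpt.right_mem.1⟩

/-- Otherwise the cycle meets `A ∩ B` on both arcs between a vertex outside `A` and one outside
`B`, so that the common edge is a chord. -/
lemma support_subset_or_of_isChordlessCycle (h : IsEdgeSum G A B x y) {v : V} {c : G.Walk v v}
    (hc : c.IsChordlessCycle) : (∀ z ∈ c.support, z ∈ A) ∨ ∀ z ∈ c.support, z ∈ B := by
  by_contra! hcon
  obtain ⟨⟨p, hp, hpA⟩, q, hq, hqB⟩ := hcon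
  have hpB : p ∈ B := h.mem_right_of_notMem_left hpA
  have hqA : q ∈ A := h.symm.mem_right_of_notMem_left hqB
  obtain ⟨w₁, w₂, hw₁, hw₂, hdisj, hedges⟩ := exists_arcs_of_isCycle hc.1 hp hq
  obtain ⟨r, hr, hrw₁⟩ := h.exists_mem_support w₁ hpB hqA
  obtain ⟨s, hs, hsw₂⟩ := h.symm.exists_mem_support w₂ hqA hpB
  have hr₂ : r ∉ w₂.support := fun hrw₂ => (hdisj r hrw₁ hrw₂).elim
    (ne_of_mem_of_not_mem hr.1 hpA) (ne_of_mem_of_not_mem hr.2 hqB)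
  have hs₁ : s ∉ w₁.support := fun hsw₁ => (hdisj s hsw₁ hsw₂).elim
    (ne_of_mem_of_not_mem hs.2 hpA) (ne_of_mem_of_not_mem hs.1 hqB)
  have hrs : G.Adj r s :=
    (h.eq_or_adj hr hs.symm).resolve_left (ne_of_mem_of_not_mem hrw₁ hs₁)
  obtain he | he := hedges _ (hc.2 r s (hw₁ hrw₁) (hw₂ hsw₂) hrs)
  · exact hs₁ (w₁.snd_mem_support_of_mem_edges he)
  · exact hr₂ (w₂.fst_mem_support_of_mem_edges he)

lemma dir_of_dir (h : IsEdgeSum G A B x y) {o₁ : (G.induce A).Orientation}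
    {o₂ : (G.induce B).Orientation}
    (h₁ : o₁.dir ⟨x, h.left_mem.1⟩ ⟨y, h.right_mem.1⟩)
    (h₂ : o₂.dir ⟨x, h.left_mem.2⟩ ⟨y, h.right_mem.2⟩) {a b : V} (haA : a ∈ A) (hbA : b ∈ A)
    (haB : a ∈ B) (hbB : b ∈ B) (hab : o₁.dir ⟨a, haA⟩ ⟨b, hbA⟩) : o₂.dir ⟨a, haB⟩ ⟨b, hbB⟩ := by
  have hadj : G.Adj a b := o₁.dir_adj _ _ hab
  obtain ⟨rfl, rfl⟩ | ⟨rfl, rfl⟩ := Sym2.eq_iff.1 (h.mk_eq_of_adj hadj ⟨haA, haB⟩ ⟨hbA, hbB⟩)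
  · exact h₂
  · exact absurd h₁ ((o₁.adj_iff_dir _ _ (o₁.dir_adj _ _ hab)).1 hab)

/-- The union of two directed relations on `A` and on `B`, as a relation on the whole vertex
set. -/
def UnionDir (r₁ : A → A → Prop) (r₂ : B → B → Prop) (a b : V) : Prop :=
  (∃ ha hb, r₁ ⟨a, ha⟩ ⟨b, hb⟩) ∨ ∃ ha hb, r₂ ⟨a, ha⟩ ⟨b, hb⟩

lemma unionDir_comm {r₁ : A → A → Prop} {r₂ : B → B → Prop} {a b : V} :
    UnionDir r₁ r₂ a b ↔ UnionDir r₂ r₁ a b :=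
  or_comm

lemma unionDir_iff_left (h : IsEdgeSum G A B x y) {o₁ : (G.induce A).Orientation}
    {o₂ : (G.induce B).Orientation} (h₁ : o₁.dir ⟨x, h.left_mem.1⟩ ⟨y, h.right_mem.1⟩)
    (h₂ : o₂.dir ⟨x, h.left_mem.2⟩ ⟨y, h.right_mem.2⟩) {a b : V} (ha : a ∈ A) (hb : b ∈ A) :
    UnionDir o₁.dir o₂.dir a b ↔ o₁.dir ⟨a, ha⟩ ⟨b, hb⟩ := by
  refine ⟨fun hab => ?_, fun hab => .inl ⟨ha, hb, hab⟩⟩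
  obtain ⟨_, _, hab⟩ | ⟨_, _, hab⟩ := hab
  exacts [hab, h.symm.dir_of_dir h₂ h₁ _ _ ha hb hab]

lemma unionDir_iff_right (h : IsEdgeSum G A B x y) {o₁ : (G.induce A).Orientation}
    {o₂ : (G.induce B).Orientation} (h₁ : o₁.dir ⟨x, h.left_mem.1⟩ ⟨y, h.right_mem.1⟩)
    (h₂ : o₂.dir ⟨x, h.left_mem.2⟩ ⟨y, h.right_mem.2⟩) {a b : V} (ha : a ∈ B) (hb : b ∈ B) :
    UnionDir o₁.dir o₂.dir a b ↔ o₂.dir ⟨a, ha⟩ ⟨b, hb⟩ :=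
  unionDir_comm.trans (h.symm.unionDir_iff_left h₂ h₁ ha hb)

lemma exists_orientation_extending (h : IsEdgeSum G A B x y) {o₁ : (G.induce A).Orientation}
    {o₂ : (G.induce B).Orientation} (h₁ : o₁.dir ⟨x, h.left_mem.1⟩ ⟨y, h.right_mem.1⟩)
    (h₂ : o₂.dir ⟨x, h.left_mem.2⟩ ⟨y, h.right_mem.2⟩) :
    ∃ o : G.Orientation, (∀ a b : A, o.dir a b ↔ o₁.dir a b) ∧
      ∀ a b : B, o.dir a b ↔ o₂.dir a b := by
  refine ⟨⟨UnionDir o₁.dir o₂.dir, fun a b hab => ?_, fun a b hab => ?_⟩,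
    fun a b => h.unionDir_iff_left h₁ h₂ a.2 b.2, fun a b => h.unionDir_iff_right h₁ h₂ a.2 b.2⟩
  · obtain ⟨_, _, hab⟩ | ⟨_, _, hab⟩ := hab
    exacts [o₁.dir_adj _ _ hab, o₂.dir_adj _ _ hab]
  · obtain ⟨ha, hb⟩ | ⟨ha, hb⟩ := h.mem_of_adj hab
    · rw [h.unionDir_iff_left h₁ h₂ ha hb, h.unionDir_iff_left h₁ h₂ hb ha]
      exact o₁.adj_iff_dir _ _ hab
    · rw [h.unionDir_iff_right h₁ h₂ ha hb, h.unionDir_iff_right h₁ h₂ hb ha]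
      exact o₂.adj_iff_dir _ _ hab

theorem cyclicallyOrientable (h : IsEdgeSum G A B x y)
    (hA : (G.induce A).CyclicallyOrientable) (hB : (G.induce B).CyclicallyOrientable) :
    G.CyclicallyOrientable := by
  obtain ⟨o₁, ho₁, h₁⟩ := exists_isCyclicOrientation_dir hA
    (x := ⟨x, h.left_mem.1⟩) (y := ⟨y, h.right_mem.1⟩) (induce_adj.2 h.adj)
  obtain ⟨o₂, ho₂, h₂⟩ := exists_isCyclicOrientation_dir hB
    (x := ⟨x, h.left_mem.2⟩) (y := ⟨y, h.right_mem.2⟩) (induce_adj.2 h.adj)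
  obtain ⟨o, hoA, hoB⟩ := h.exists_orientation_extending h₁ h₂
  refine ⟨o, fun v c hc => ?_⟩
  obtain hcA | hcB := h.support_subset_or_of_isChordlessCycle hc
  · exact isCyclicOn_of_support_subset ho₁ hoA hc hcA
  · exact isCyclicOn_of_support_subset ho₂ hoB hc hcB

end IsEdgeSum

end Gluing

section BaseCases

variable {G : SimpleGraph V}

lemma nonempty_orientation (G : SimpleGraph V) : Nonempty G.Orientation :=
  ⟨{dir := fun a b => G.Adj a b ∧ WellOrderingRel a b
    dir_adj := fun _ _ h => h.1
    adj_iff_dir := fun a b hab => by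
      have := trichotomous_of WellOrderingRel a b
      have := asymm_of WellOrderingRel (a := a) (b := b)
      grind [hab.ne, hab.symm] }⟩

lemma cyclicallyOrientable_of_isAcyclic (hG : G.IsAcyclic) : G.CyclicallyOrientable := by
  obtain ⟨o⟩ := nonempty_orientation G
  exact ⟨o, fun v c hc => absurd hc.1 (hG c)⟩

lemma isAcyclic_of_forall_eq_or_eq {x y : V} (hV : ∀ v, v = x ∨ v = y) : G.IsAcyclic := by
  refine IsAcyclic.of_card_le_two ?_
  rw [← Set.encard_univ, ← Set.eq_univ_of_forall (s := {x, y}) hV]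
  exact (Set.encard_insert_le {y} x).trans (by rw [Set.encard_singleton, one_add_one_eq_two])

lemma dir_of_mem_darts_cons {o : G.Orientation}
    (hin : ∀ ⦃a b c⦄, o.dir a c → o.dir b c → a = b) {a b c : V} {hab : G.Adj a b}
    {p : G.Walk b c} (hp : (p.cons hab).IsTrail) (hdir : o.dir a b) {d : G.Dart}
    (hd : d ∈ (p.cons hab).darts) : o.dir d.fst d.snd := by
  induction p generalizing a with
  | nil =>
    obtain rfl : d = ⟨(a, _), hab⟩ := by simpa using hd
    exact hdir
  | @cons b e c hbe p ih =>
    obtain ⟨hp, habp⟩ := (Walk.isTrail_cons _ _).1 hp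
    have hbe' : o.dir b e := (o.adj_iff_dir b e hbe).2 fun heb => habp <| by
      simp [hin hdir heb, Sym2.eq_swap]
    obtain rfl | hd := List.mem_cons.1 hd
    · exact hdir
    · exact ih hp hbe' hd

lemma isCyclicOn_of_isTrail {o : G.Orientation} (hin : ∀ ⦃a b c⦄, o.dir a c → o.dir b c → a = b)
    (hout : ∀ ⦃a b c⦄, o.dir a b → o.dir a c → b = c) {v : V} {c : G.Walk v v} (hc : c.IsTrail) :
    o.IsCyclicOn c := by
  cases c with
  | nil => exact .inl (by simp)
  | @cons _ b _ hvb p =>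
    by_cases hdir : o.dir v b
    · exact .inl fun d hd => dir_of_mem_darts_cons hin hc hdir hd
    · have hdir' : (reverseOrientation o).dir v b := (o.adj_iff_dir b v hvb.symm).2 hdir
      exact .inr fun d hd => dir_of_mem_darts_cons (o := reverseOrientation o)
        (fun _ _ _ h h' => hout h h') hc hdir' hd

/-- The orientation of a graph along a cycle that uses all its edges. -/
def orientationAlong {v : V} {c : G.Walk v v} (hc : c.IsCycle)
    (hG : ∀ e ∈ G.edgeSet, e ∈ c.edges) : G.Orientation where
  dir a b := ∃ h : G.Adj a b, ⟨(a, b), h⟩ ∈ c.darts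
  dir_adj _ _ h := h.1
  adj_iff_dir a b hab := by
    refine ⟨fun ⟨_, h⟩ ⟨hba, h'⟩ => hab.ne ?_, fun h => ⟨hab, ?_⟩⟩
    · exact congrArg (·.fst) (List.inj_on_of_nodup_map hc.edges_nodup h h' Sym2.eq_swap)
    · obtain ⟨d, hd, hde⟩ := List.mem_map.1 (hG s(a, b) hab)
      obtain rfl | rfl := (dart_edge_eq_iff d ⟨(a, b), hab⟩).1 hde
      exacts [hd, absurd ⟨hab.symm, hd⟩ h]

lemma cyclicallyOrientable_of_isCycleGraph (hG : G.IsCycleGraph) : G.CyclicallyOrientable := by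
  obtain ⟨v, c, hc, -, hedges⟩ := hG
  have hsnd : (c.darts.map (·.snd)).Nodup := c.map_snd_darts ▸ hc.support_nodup
  have hfst : (c.darts.map (·.fst)).Nodup := c.map_fst_darts ▸ hc.nodup_dropLast_support
  refine ⟨orientationAlong hc hedges, fun _ p hp => isCyclicOn_of_isTrail ?_ ?_ hp.1.isTrail⟩
  · rintro a b e ⟨_, ha⟩ ⟨_, hb⟩
    exact congrArg (·.fst) (List.inj_on_of_nodup_map hsnd ha hb rfl)
  · rintro a b e ⟨_, hb⟩ ⟨_, he⟩
    exact congrArg (·.snd) (List.inj_on_of_nodup_map hfst hb he rfl)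

end BaseCases

section Translation

variable {G : SimpleGraph V} {A B : Set V} {H C : G.Subgraph} {x y : V}

lemma isEdgeSum_of_meetAlongSingleEdge (h : H ⊔ C = ⊤) (hxy : H.MeetAlongSingleEdge C x y) :
    IsEdgeSum G H.verts C.verts x y where
  adj := by
    have : s(x, y) ∈ (H ⊓ C).edgeSet := hxy.2.2 ▸ Set.mem_singleton _
    exact (H ⊓ C).adj_sub this
  union_eq := by rw [← Subgraph.verts_sup, h, Subgraph.verts_top]
  inter_eq := hxy.2.1
  mem_of_adj a b hab := by
    have hab' : (H ⊔ C).Adj a b := h ▸ hab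
    exact (Subgraph.sup_adj.1 hab').imp (fun h => ⟨h.fst_mem, h.snd_mem⟩)
      fun h => ⟨h.fst_mem, h.snd_mem⟩

lemma isInduced_of_meetAlongSingleEdge (h : H ⊔ C = ⊤) (hxy : H.MeetAlongSingleEdge C x y) :
    H.IsInduced := by
  have hsum := isEdgeSum_of_meetAlongSingleEdge h hxy
  intro a ha b hb hab
  have hab' : (H ⊔ C).Adj a b := h ▸ hab
  refine (Subgraph.sup_adj.1 hab').elim id fun hC => ?_
  have he : s(a, b) ∈ (H ⊓ C).edgeSet :=
    hxy.2.2 ▸ hsum.mk_eq_of_adj hab ⟨ha, hC.fst_mem⟩ ⟨hb, hC.snd_mem⟩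
  exact (Subgraph.inf_adj.1 he).1

lemma coe_eq_induce_of_isInduced (hH : H.IsInduced) : H.coe = G.induce H.verts := by
  ext a b
  exact hH.adj

lemma cyclicallyOrientable_of_meetAlongSingleEdge (h : H ⊔ C = ⊤)
    (hxy : H.MeetAlongSingleEdge C x y) (hH : H.coe.CyclicallyOrientable)
    (hC : C.coe.CyclicallyOrientable) : G.CyclicallyOrientable := by
  have hyx : C.MeetAlongSingleEdge H x y := by
    rwa [Subgraph.MeetAlongSingleEdge, inf_comm]
  rw [coe_eq_induce_of_isInduced (isInduced_of_meetAlongSingleEdge h hxy)] at hH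
  rw [coe_eq_induce_of_isInduced (isInduced_of_meetAlongSingleEdge (sup_comm H C ▸ h) hyx)] at hC
  exact (isEdgeSum_of_meetAlongSingleEdge h hxy).cyclicallyOrientable hH hC

namespace IsEdgeSum

lemma induce_sup_induce (h : IsEdgeSum G A B x y) :
    (⊤ : G.Subgraph).induce A ⊔ (⊤ : G.Subgraph).induce B = ⊤ := by
  refine Subgraph.ext h.union_eq ?_
  ext a b
  simp only [Subgraph.sup_adj, Subgraph.induce_adj, Subgraph.top_adj]
  refine ⟨fun hab => hab.elim (·.2.2) (·.2.2), fun hab => ?_⟩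
  exact (h.mem_of_adj hab).imp (fun h => ⟨h.1, h.2, hab⟩) fun h => ⟨h.1, h.2, hab⟩

lemma meetAlongSingleEdge_induce (h : IsEdgeSum G A B x y) :
    ((⊤ : G.Subgraph).induce A).MeetAlongSingleEdge ((⊤ : G.Subgraph).induce B) x y := by
  refine ⟨h.adj.ne, h.inter_eq, ?_⟩
  ext e
  induction e with | _ a b
  rw [Subgraph.mem_edgeSet, Subgraph.inf_adj, Subgraph.induce_adj, Subgraph.induce_adj,
    Subgraph.top_adj, Set.mem_singleton_iff]
  refine ⟨fun ⟨⟨haA, hbA, hab⟩, haB, hbB, _⟩ => h.mk_eq_of_adj hab ⟨haA, haB⟩ ⟨hbA, hbB⟩,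
    fun he => ?_⟩
  have hab : G.Adj a b := by rw [← mem_edgeSet, he]; exact h.adj
  obtain ⟨rfl, rfl⟩ | ⟨rfl, rfl⟩ := Sym2.eq_iff.1 he
  · exact ⟨⟨h.left_mem.1, h.right_mem.1, hab⟩, h.left_mem.2, h.right_mem.2, hab⟩
  · exact ⟨⟨h.right_mem.1, h.left_mem.1, hab⟩, h.right_mem.2, h.left_mem.2, hab⟩

end IsEdgeSum

end Translation

end CyclicOrientation

/-- A two-connected finite simple graph `G` is cyclically orientable
iff `G` is a single edge, or a cycle, or `G = G' ∪ C` where `G'` is cyclically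
orientable, `C` is a cycle, and `G'` and `C` meet along a single edge. -/
theorem twoConnected_co_iff {V : Type*} [Fintype V] (G : SimpleGraph V)
    (h2 : G.IsTwoConnected) :
    G.CyclicallyOrientable ↔
      ((∃ x y : V, x ≠ y ∧ G.Adj x y ∧ ∀ v : V, v = x ∨ v = y) ∨
        G.IsCycleGraph ∨
        ∃ (G' C : G.Subgraph) (x y : V), G' ⊔ C = ⊤ ∧
          G'.coe.CyclicallyOrientable ∧ C.coe.IsCycleGraph ∧
          G'.MeetAlongSingleEdge C x y) := by
  refine ⟨fun hG => ?_, ?_⟩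
  · by_cases hV : ∀ x y : V, ∃ z, z ≠ x ∧ z ≠ y
    · obtain ⟨A, B, x, y, h, hB⟩ := CyclicOrientation.exists_isEdgeSum_isCycleGraph h2 hG hV
      have hA : (G.induce A).CyclicallyOrientable :=
        CyclicOrientation.cyclicallyOrientable_of_embedding (Embedding.induce A) hG
      rw [induce_eq_coe_induce_top] at hA hB
      exact .inr (.inr ⟨_, _, x, y, h.induce_sup_induce, hA, hB, h.meetAlongSingleEdge_induce⟩)
    · push Not at hV
      obtain ⟨x, y, hV⟩ := hV
      obtain ⟨a, hxa⟩ := CyclicOrientation.exists_adj_of_isTwoConnected h2 x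
      obtain rfl : a = y := hV a hxa.ne'
      exact .inl ⟨x, a, hxa.ne, hxa, fun v => or_iff_not_imp_left.2 (hV v)⟩
  · rintro (⟨x, y, -, -, hV⟩ | hG | ⟨G', C, x, y, h, hG', hC, hxy⟩)
    · exact CyclicOrientation.cyclicallyOrientable_of_isAcyclic
        (CyclicOrientation.isAcyclic_of_forall_eq_or_eq hV)
    · exact CyclicOrientation.cyclicallyOrientable_of_isCycleGraph hG
    · exact CyclicOrientation.cyclicallyOrientable_of_meetAlongSingleEdge h hxy hG'
        (CyclicOrientation.cyclicallyOrientable_of_isCycleGraph hC)
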